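/- There is an absolute constant C such that for any class F of functions from a set Ω into [-1,1], any positive integer n, every empirical measure μ_n supported on n points of Ω, and every t > 0, log N(F, L_2(μ_n), t) ≤ C · fat_{t/8}(F) · log²(2/t), where N(F, L_2(μ_n), t) is the minimal number of L_2(μ_n)-balls of radius t needed to cover F and fat_ε(F) is the fat-shattering dimension of F at scale ε. -/

import Mathlib

/-!
A class that needs many balls contains a large `t`-separated set `S`, and such a set is bounded
by counting shattered sets at scale `t / 8`, in three stages.

*Sampling.* Functions into `[-1, 1]` at `L₂` distance more than `t` differ by at least `t / 2` on
a proportion `ρ = t ^ 2 / 8` of the points. By a Chernoff bound (`exists_good_sample`) this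
survives, with proportion `ρ / 4`, on a sample of size `m` of order `log |S| / ρ`. The number
`n` of points disappears here.

*Discretization.* Cut `[-1, 1]` into about `16 / t` cells of length `t / 8`. Each pair
`y = (sample point, cell)` is a partial binary test on functions: low if the value is at most the
upper end of the cell, high if it exceeds that end by at least `t / 4`, undefined in between. A
set of tests on which `S` shows all low/high patterns projects injectively to a set of points that
is `t / 8`-shattered, so it has at most `d` elements (`exists_fatShattered_of_shatters`). Hence at
most `(e M / d) ^ d` sets of tests are shattered, with `M` the number of tests
(`log_card_le_of_card_le`).

*Splitting.* Double counting gives a test for which the low part and the high part of `S` both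
have proportion of order `t ^ 3` in `S`; the numbers of sets shattered by the two parts add up to
at most the number shattered by `S` (`card_shatteredSets_add_le`). Iterating, a separated set of
size `K ^ k`, with `log K` of order `log (2 / t)`, shatters at least `2 ^ k` sets.

Comparing the two counts for `L = log |S|` gives
`L ≲ d log (2 / t) (log (2 / t) + log (L / d))`, which resolves to `L ≲ d log ^ 2 (2 / t)`. For
`d = 0` there are no two separated functions, and for `t ≥ 1` one ball suffices.
-/

/-- The empirical `L₂(μ_n)` distance between two functions, where `μ_n` is the empirical
measure supported on the points `pts 0, …, pts (n-1)`. -/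
noncomputable def empL2Dist {Ω : Type*} {n : ℕ} (pts : Fin n → Ω) (f g : Ω → ℝ) : ℝ :=
  Real.sqrt ((n : ℝ)⁻¹ * ∑ i, (f (pts i) - g (pts i)) ^ 2)

/-- The covering number `N(F, L₂(μ_n), t)`: the minimal number of balls of radius `t` in the
`L₂(μ_n)` pseudometric needed to cover `F`. -/
noncomputable def empL2CovN {Ω : Type*} {n : ℕ} (F : Set (Ω → ℝ)) (pts : Fin n → Ω)
    (t : ℝ) : ℕ :=
  sInf {m : ℕ | ∃ s : Finset (Ω → ℝ), s.card = m ∧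
    ∀ f ∈ F, ∃ g ∈ s, empL2Dist pts f g ≤ t}

/-- A finite set `A ⊆ Ω` is `ε`-shattered by `F` if there is a level function `γ` such that
for every `I ⊆ A` some `f ∈ F` is above `γ + ε` on `I` and below `γ - ε` on `A \ I`. -/
def FatShattered {Ω : Type*} (F : Set (Ω → ℝ)) (ε : ℝ) (A : Finset Ω) : Prop :=
  ∃ γ : Ω → ℝ, ∀ I ⊆ A, ∃ f ∈ F,
    (∀ x ∈ I, γ x + ε ≤ f x) ∧ (∀ x ∈ A, x ∉ I → f x ≤ γ x - ε)

/-! ### Counting sets shattered by partial binary functions -/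

/-- `U`/`L`-shattering for a family `S` of partial binary functions on `Y`: `U f y` means that
`f` has value `1` at `y`, `L f y` that it has value `0`, and `f` is undefined at `y` otherwise.
Every subset `I` of `B` is cut out by a member of `S` that is defined on all of `B`. -/
def Shatters {α Y : Type*} (U L : α → Y → Prop) (S : Finset α) (B : Finset Y) : Prop :=
  ∀ I ⊆ B, ∃ f ∈ S, (∀ y ∈ I, U f y) ∧ ∀ y ∈ B, y ∉ I → L f y

open Classical in
/-- The finite collection of all sets shattered by `S`. -/
noncomputable def shatteredSets {α Y : Type*} [Fintype Y] (U L : α → Y → Prop)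
    (S : Finset α) : Finset (Finset Y) :=
  Finset.univ.filter fun B => Shatters U L S B

theorem Shatters.mono {α Y : Type*} {U L : α → Y → Prop} {S T : Finset α} (hST : S ⊆ T)
    {B : Finset Y} (h : Shatters U L S B) : Shatters U L T B := fun I hI =>
  let ⟨f, hf, h1⟩ := h I hI
  ⟨f, hST hf, h1⟩

open Classical in
/-- Superadditivity: a set shattered by one of the two halves avoids `y`, and a set shattered by
both remains shattered by `S` after adding `y`. -/
theorem card_shatteredSets_add_le {α Y : Type*} [Fintype Y] {U L : α → Y → Prop}
    (hUL : ∀ f y, U f y → L f y → False) (S : Finset α) (y : Y) :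
    (shatteredSets U L (S.filter fun f => L f y)).card
      + (shatteredSets U L (S.filter fun f => U f y)).card ≤ (shatteredSets U L S).card := by
  set T0 := shatteredSets U L (S.filter fun f => L f y) with hT0
  set T1 := shatteredSets U L (S.filter fun f => U f y) with hT1
  have h0 : ∀ B ∈ T0, Shatters U L (S.filter fun f => L f y) B := by
    intro B hB; simpa [hT0, shatteredSets] using hB
  have h1 : ∀ B ∈ T1, Shatters U L (S.filter fun f => U f y) B := by
    intro B hB; simpa [hT1, shatteredSets] using hB
  have hy0 : ∀ B ∈ T0, y ∉ B := by
    intro B hB hy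
    obtain ⟨f, hf, hfU, -⟩ := h0 B hB B subset_rfl
    exact hUL f y (hfU y hy) (Finset.mem_filter.1 hf).2
  have hy1 : ∀ B ∈ T1, y ∉ B := by
    intro B hB hy
    obtain ⟨f, hf, -, hfL⟩ := h1 B hB ∅ (Finset.empty_subset _)
    exact hUL f y (Finset.mem_filter.1 hf).2 (hfL y hy (Finset.notMem_empty _))
  have hinj : Set.InjOn (fun B : Finset Y => insert y B) (T0 ∩ T1 : Finset (Finset Y)) := by
    intro B hB B' hB' h
    have hB := hy0 B (Finset.mem_inter.1 (Finset.mem_coe.1 hB)).1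
    have hB' := hy0 B' (Finset.mem_inter.1 (Finset.mem_coe.1 hB')).1
    have := congrArg (fun s : Finset Y => s.erase y) h
    simpa [Finset.erase_insert hB, Finset.erase_insert hB'] using this
  have hdisj : Disjoint (T0 ∪ T1) ((T0 ∩ T1).image fun B => insert y B) := by
    rw [Finset.disjoint_left]
    intro B hB hB'
    obtain ⟨B', -, rfl⟩ := Finset.mem_image.1 hB'
    rcases Finset.mem_union.1 hB with h | h
    · exact hy0 _ h (Finset.mem_insert_self _ _)
    · exact hy1 _ h (Finset.mem_insert_self _ _)
  rw [← Finset.card_union_add_card_inter, ← Finset.card_image_of_injOn hinj,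
    ← Finset.card_union_of_disjoint hdisj]
  refine Finset.card_le_card fun B hB => ?_
  simp only [shatteredSets, Finset.mem_filter, Finset.mem_univ, true_and]
  rcases Finset.mem_union.1 hB with hB | hB
  · rcases Finset.mem_union.1 hB with h | h
    · exact (h0 B h).mono (Finset.filter_subset _ _)
    · exact (h1 B h).mono (Finset.filter_subset _ _)
  · obtain ⟨B, hBi, rfl⟩ := Finset.mem_image.1 hB
    obtain ⟨hB0, hB1⟩ := Finset.mem_inter.1 hBi
    intro I hI
    have hsub : I.erase y ⊆ B := by
      intro z hz
      obtain ⟨hzy, hz⟩ := Finset.mem_erase.1 hz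
      exact (Finset.mem_insert.1 (hI hz)).resolve_left hzy
    by_cases hyI : y ∈ I
    · obtain ⟨f, hf, hfU, hfL⟩ := h1 B hB1 _ hsub
      obtain ⟨hf, hfy⟩ := Finset.mem_filter.1 hf
      refine ⟨f, hf, fun z hz => ?_, fun z hz hzI => ?_⟩
      · by_cases hzy : z = y
        · exact hzy ▸ hfy
        · exact hfU z (Finset.mem_erase.2 ⟨hzy, hz⟩)
      · have hzy : z ≠ y := fun h => hzI (h ▸ hyI)
        exact hfL z ((Finset.mem_insert.1 hz).resolve_left hzy)
          fun h => hzI (Finset.mem_of_mem_erase h)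
    · rw [Finset.erase_eq_of_notMem hyI] at hsub
      obtain ⟨f, hf, hfU, hfL⟩ := h0 B hB0 _ hsub
      obtain ⟨hf, hfy⟩ := Finset.mem_filter.1 hf
      refine ⟨f, hf, hfU, fun z hz hzI => ?_⟩
      by_cases hzy : z = y
      · exact hzy ▸ hfy
      · exact hfL z ((Finset.mem_insert.1 hz).resolve_left hzy) hzI

open Classical in
/-- If every pair of members is separated by a proportion `c` of the points of `Y`, then double
counting yields one point at which both halves of `S` are large. -/
theorem exists_balanced_split {α Y : Type*} [Fintype Y] [Nonempty Y] {U L : α → Y → Prop}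
    {c : ℝ} (hc : 0 < c) (S : Finset α) (hS : 2 ≤ S.card)
    (hsep : ∀ f ∈ S, ∀ g ∈ S, f ≠ g → c * Fintype.card Y ≤
      ((Finset.univ.filter fun y => L f y ∧ U g y).card : ℝ)
        + (Finset.univ.filter fun y => L g y ∧ U f y).card) :
    ∃ y, c / 4 * S.card ≤ (S.filter fun f => L f y).card ∧
      c / 4 * S.card ≤ (S.filter fun f => U f y).card := by
  set N : ℝ := (S.card : ℝ) with hN
  have hN2 : (2 : ℝ) ≤ N := by rw [hN]; exact_mod_cast hS
  set W : α → α → ℝ := fun f g => ((Finset.univ.filter fun y => L f y ∧ U g y).card : ℝ) with hW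
  have hW0 : ∀ f g, 0 ≤ W f g := fun f g => Nat.cast_nonneg _
  have hcount : ∑ y : Y, ((S.filter fun f => L f y).card : ℝ) * (S.filter fun f => U f y).card
      = ∑ f ∈ S, ∑ g ∈ S, W f g := by
    have h1 : ∀ y : Y, ((S.filter fun f => L f y).card : ℝ) * (S.filter fun f => U f y).card
        = ∑ f ∈ S, ∑ g ∈ S, if L f y ∧ U g y then (1 : ℝ) else 0 := by
      intro y
      rw [Finset.card_filter, Finset.card_filter]
      push_cast
      rw [Finset.sum_mul_sum]
      refine Finset.sum_congr rfl fun f _ => Finset.sum_congr rfl fun g _ => ?_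
      by_cases h1 : L f y <;> by_cases h2 : U g y <;> simp [h1, h2]
    simp_rw [h1]
    rw [Finset.sum_comm]
    refine Finset.sum_congr rfl fun f _ => ?_
    rw [Finset.sum_comm]
    refine Finset.sum_congr rfl fun g _ => ?_
    simp [hW]
  have hlow : N * (N - 1) * (c * Fintype.card Y) ≤ 2 * ∑ f ∈ S, ∑ g ∈ S, W f g := by
    have h2 : 2 * ∑ f ∈ S, ∑ g ∈ S, W f g = ∑ f ∈ S, ∑ g ∈ S, (W f g + W g f) := by
      simp_rw [Finset.sum_add_distrib]
      rw [Finset.sum_comm (f := fun f g => W g f)]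
      ring
    rw [h2]
    have h3 : ∀ f ∈ S, (N - 1) * (c * Fintype.card Y) ≤ ∑ g ∈ S, (W f g + W g f) := by
      intro f hf
      calc (N - 1) * (c * Fintype.card Y) = ∑ g ∈ S.erase f, c * Fintype.card Y := by
            rw [Finset.sum_const, nsmul_eq_mul, Finset.card_erase_of_mem hf,
              Nat.cast_sub (by omega)]
            simp [hN]
        _ ≤ ∑ g ∈ S.erase f, (W f g + W g f) := by
            refine Finset.sum_le_sum fun g hg => ?_
            obtain ⟨hgf, hg⟩ := Finset.mem_erase.1 hg
            exact hsep f hf g hg (Ne.symm hgf)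
        _ ≤ _ := Finset.sum_le_sum_of_subset_of_nonneg (Finset.erase_subset _ _)
            fun g _ _ => add_nonneg (hW0 _ _) (hW0 _ _)
    calc N * (N - 1) * (c * Fintype.card Y) = ∑ f ∈ S, (N - 1) * (c * Fintype.card Y) := by
          rw [Finset.sum_const, nsmul_eq_mul]; ring
      _ ≤ _ := Finset.sum_le_sum h3
  have hex : ∃ y ∈ (Finset.univ : Finset Y), N ^ 2 * c / 4 ≤
      ((S.filter fun f => L f y).card : ℝ) * (S.filter fun f => U f y).card := by
    refine Finset.exists_le_of_sum_le Finset.univ_nonempty ?_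
    rw [hcount, Finset.sum_const, nsmul_eq_mul, Finset.card_univ]
    have hY : (0 : ℝ) ≤ c * Fintype.card Y := by positivity
    nlinarith [mul_nonneg (mul_nonneg (by linarith : 0 ≤ N) (by linarith : 0 ≤ N - 2)) hY]
  obtain ⟨y, -, hy⟩ := hex
  have ha : ((S.filter fun f => L f y).card : ℝ) ≤ N := by
    rw [hN]; exact_mod_cast Finset.card_filter_le _ _
  have hb : ((S.filter fun f => U f y).card : ℝ) ≤ N := by
    rw [hN]; exact_mod_cast Finset.card_filter_le _ _
  have hNpos : 0 < N := by linarith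
  refine ⟨y, ?_, ?_⟩
  · refine le_of_mul_le_mul_right (a := N) ?_ hNpos
    nlinarith [mul_le_mul_of_nonneg_left hb
      (Nat.cast_nonneg (α := ℝ) (S.filter fun f => L f y).card)]
  · refine le_of_mul_le_mul_right (a := N) ?_ hNpos
    nlinarith [mul_le_mul_of_nonneg_right ha
      (Nat.cast_nonneg (α := ℝ) (S.filter fun f => U f y).card)]

open Classical in
/-- Iterating the balanced split: a separated family of size at least `K ^ k` shatters at least
`2 ^ k` sets. -/
theorem two_pow_le_card_shatteredSets {α Y : Type*} [Fintype Y] [Nonempty Y]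
    {U L : α → Y → Prop} (hUL : ∀ f y, U f y → L f y → False)
    {c K : ℝ} (hc : 0 < c) (hK : 2 ≤ K) (hcK : 4 ≤ c * K) (k : ℕ) :
    ∀ S : Finset α, (∀ f ∈ S, ∀ g ∈ S, f ≠ g → c * Fintype.card Y ≤
      ((Finset.univ.filter fun y => L f y ∧ U g y).card : ℝ)
        + (Finset.univ.filter fun y => L g y ∧ U f y).card) →
      K ^ k ≤ S.card → 2 ^ k ≤ (shatteredSets U L S).card := by
  induction k with
  | zero =>
    intro S _ hS
    have hS : 0 < S.card := by
      have : (0 : ℝ) < S.card := lt_of_lt_of_le (by simp) hS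
      exact_mod_cast this
    obtain ⟨f, hf⟩ := Finset.card_pos.1 hS
    refine Finset.card_pos.2 ⟨∅, ?_⟩
    simp only [shatteredSets, Finset.mem_filter, Finset.mem_univ, true_and]
    intro I hI
    rw [Finset.subset_empty.1 hI]
    exact ⟨f, hf, by simp, by simp⟩
  | succ k ih =>
    intro S hsep hS
    have hKk : 1 ≤ K ^ k := one_le_pow₀ (by linarith)
    have hS2 : 2 ≤ S.card := by
      have : (2 : ℝ) ≤ S.card := by rw [pow_succ] at hS; nlinarith
      exact_mod_cast this
    obtain ⟨y, h0, h1⟩ := exists_balanced_split hc S hS2 hsep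
    have hstep : K ^ k ≤ c / 4 * S.card := by
      rw [pow_succ] at hS
      nlinarith [mul_le_mul_of_nonneg_left hS hc.le,
        mul_le_mul_of_nonneg_left hcK (by linarith : 0 ≤ K ^ k)]
    have hres : ∀ p : α → Prop, ∀ f ∈ S.filter p, ∀ g ∈ S.filter p, f ≠ g →
        c * Fintype.card Y ≤ ((Finset.univ.filter fun y => L f y ∧ U g y).card : ℝ)
        + (Finset.univ.filter fun y => L g y ∧ U f y).card := fun p f hf g hg =>
      hsep f (Finset.mem_filter.1 hf).1 g (Finset.mem_filter.1 hg).1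
    have i0 := ih _ (hres fun f => L f y) (hstep.trans h0)
    have i1 := ih _ (hres fun f => U f y) (hstep.trans h1)
    have := card_shatteredSets_add_le hUL S y
    rw [pow_succ]
    omega

/-- The Sauer-type count `∑_{k ≤ d} (M choose k) ≤ (e M / d) ^ d`, in logarithmic form. -/
theorem log_card_le_of_card_le {Y : Type*} [Fintype Y] (T : Finset (Finset Y)) {d : ℕ}
    (hd : 0 < d) (hdM : d ≤ Fintype.card Y) (hT : ∀ B ∈ T, B.card ≤ d) (hne : T.Nonempty) :
    Real.log T.card ≤ d * Real.log (Fintype.card Y / d) + d := by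
  set M : ℝ := (Fintype.card Y : ℝ) with hM
  have hd' : (0 : ℝ) < d := by exact_mod_cast hd
  have hdM' : (d : ℝ) ≤ M := by rw [hM]; exact_mod_cast hdM
  have hM0 : 0 < M := by linarith
  set z : ℝ := d / M with hz
  have hz0 : 0 < z := by positivity
  have hz1 : z ≤ 1 := (div_le_one hM0).2 hdM'
  have h1 : (T.card : ℝ) * z ^ d ≤ (z + 1) ^ Fintype.card Y := by
    rw [← Finset.card_univ, ← Finset.sum_pow_mul_eq_add_pow, ← nsmul_eq_mul,
      ← Finset.sum_const]
    refine (Finset.sum_le_sum (g := fun B : Finset Y => z ^ B.card) fun B hB =>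
      pow_le_pow_of_le_one hz0.le hz1 (hT B hB)).trans ?_
    simp only [one_pow, mul_one]
    exact Finset.sum_le_sum_of_subset_of_nonneg (by simp) fun _ _ _ => by positivity
  have hTpos : (0 : ℝ) < T.card := by exact_mod_cast hne.card_pos
  have h2 := Real.log_le_log (by positivity) h1
  rw [Real.log_mul hTpos.ne' (by positivity), Real.log_pow, Real.log_pow] at h2
  have h3 : Real.log (z + 1) ≤ z := by
    have := Real.log_le_sub_one_of_pos (by linarith : 0 < z + 1)
    linarith
  have h4 : M * z = d := by rw [hz]; field_simp
  have h5 : Real.log (M / d) = - Real.log z := by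
    rw [hz, ← Real.log_inv, inv_div]
  rw [h5]
  nlinarith [mul_le_mul_of_nonneg_left h3 hM0.le]

/-! ### Sampling -/

open Classical in
/-- Random sampling: events of proportion at least `ρ`, at most `N ^ 2` in number, all keep
proportion `ρ / 4` on a suitable sample (with repetition) of size `m`, where `ρ m ≥ 8 log N`.
This is the Chernoff bound, from averaging `2 ^ (- number of hits)` over all samples. -/
theorem exists_good_sample {β : Type*} {n m : ℕ} (hn : 0 < n) {ρ N : ℝ}
    (hN : 1 ≤ N) (P : Finset β) (hP : (P.card : ℝ) ≤ N ^ 2) (G : β → Fin n → Prop)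
    (hG : ∀ p ∈ P, ρ * n ≤ (Finset.univ.filter fun i => G p i).card)
    (hm : 8 * Real.log N ≤ ρ * m) :
    ∃ φ : Fin m → Fin n, ∀ p ∈ P,
      ρ / 4 * m ≤ (Finset.univ.filter fun j => G p (φ j)).card := by
  have hn' : (0 : ℝ) < n := by exact_mod_cast hn
  have : Nonempty (Fin n) := ⟨⟨0, hn⟩⟩
  set w : β → Fin n → ℝ := fun p i => if G p i then 1 / 2 else 1 with hw
  have hw0 : ∀ p i, 0 ≤ w p i := by
    intro p i; simp only [hw]; split_ifs <;> norm_num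
  have hsum : ∀ p ∈ P, ∑ i, w p i ≤ n * Real.exp (-ρ / 2) := by
    intro p hp
    have h1 : ∑ i, w p i = n - (Finset.univ.filter fun i => G p i).card / 2 := by
      have h2 : ∀ i, w p i = 1 - (if G p i then (1 : ℝ) else 0) / 2 := by
        intro i; simp only [hw]; split_ifs <;> norm_num
      simp_rw [h2, Finset.sum_sub_distrib, ← Finset.sum_div]
      simp
    have h3 := Real.add_one_le_exp (-ρ / 2)
    have h4 := hG p hp
    rw [h1]
    nlinarith
  have hav : ∃ φ ∈ (Finset.univ : Finset (Fin m → Fin n)),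
      ∑ p ∈ P, ∏ j, w p (φ j) ≤ N ^ 2 * Real.exp (-ρ / 2) ^ m := by
    refine Finset.exists_le_of_sum_le Finset.univ_nonempty ?_
    rw [Finset.sum_comm]
    calc ∑ p ∈ P, ∑ φ : Fin m → Fin n, ∏ j, w p (φ j) = ∑ p ∈ P, (∑ i, w p i) ^ m := by
          refine Finset.sum_congr rfl fun p _ => ?_
          rw [Fintype.sum_pow]
      _ ≤ ∑ p ∈ P, (n * Real.exp (-ρ / 2)) ^ m := Finset.sum_le_sum fun p hp =>
          pow_le_pow_left₀ (Finset.sum_nonneg fun i _ => hw0 p i) (hsum p hp) m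
      _ = P.card * (n * Real.exp (-ρ / 2)) ^ m := by rw [Finset.sum_const, nsmul_eq_mul]
      _ ≤ N ^ 2 * (n * Real.exp (-ρ / 2)) ^ m := by gcongr
      _ = _ := by
          rw [Finset.sum_const, nsmul_eq_mul, Finset.card_univ, Fintype.card_fun,
            Fintype.card_fin, Fintype.card_fin, mul_pow]
          push_cast; ring
  obtain ⟨φ, -, hφ⟩ := hav
  refine ⟨φ, fun p hp => ?_⟩
  set h := (Finset.univ.filter fun j => G p (φ j)).card with hh
  have h1 : ((1 : ℝ) / 2) ^ h ≤ N ^ 2 * Real.exp (-ρ / 2) ^ m := by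
    refine le_trans ?_ hφ
    refine le_trans (le_of_eq ?_) (Finset.single_le_sum (f := fun p => ∏ j, w p (φ j))
      (fun q _ => Finset.prod_nonneg fun j _ => hw0 q _) hp)
    simp only [hw]
    rw [Finset.prod_ite]
    simp [hh]
  have h2 := Real.log_le_log (by positivity) h1
  rw [Real.log_mul (by positivity) (by positivity), Real.log_pow, Real.log_pow, Real.log_pow,
    Real.log_exp, one_div, Real.log_inv] at h2
  have h3 : Real.log 2 ≤ 1 := by
    have := Real.log_le_sub_one_of_pos (by norm_num : (0 : ℝ) < 2); linarith
  have h4 : (h : ℝ) * Real.log 2 ≤ h := mul_le_of_le_one_right (Nat.cast_nonneg _) h3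
  push_cast at h2
  linarith

theorem lt_sum_of_lt_empL2Dist {Ω : Type*} {n : ℕ} (hn : 0 < n) {pts : Fin n → Ω}
    {f g : Ω → ℝ} {t : ℝ} (ht : 0 < t) (h : t < empL2Dist pts f g) :
    t ^ 2 * n < ∑ i, (f (pts i) - g (pts i)) ^ 2 := by
  have hn' : (0 : ℝ) < n := by exact_mod_cast hn
  have h1 := (Real.lt_sqrt ht.le).1 h
  rw [inv_mul_eq_div, lt_div_iff₀ hn'] at h1
  exact h1

open Classical in
theorem card_far_of_lt_empL2Dist {Ω : Type*} {n : ℕ} (hn : 0 < n) {pts : Fin n → Ω}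
    {f g : Ω → ℝ} {t : ℝ} (ht : 0 < t) (hf : ∀ ω, |f ω| ≤ 1) (hg : ∀ ω, |g ω| ≤ 1)
    (h : t < empL2Dist pts f g) :
    t ^ 2 / 8 * n ≤
      (Finset.univ.filter fun i => t / 2 ≤ |f (pts i) - g (pts i)|).card := by
  have h1 := lt_sum_of_lt_empL2Dist hn ht h
  have h2 : ∑ i, (f (pts i) - g (pts i)) ^ 2 ≤
      ∑ i : Fin n, (t ^ 2 / 4 + 4 * if t / 2 ≤ |f (pts i) - g (pts i)| then (1 : ℝ) else 0) := by
    refine Finset.sum_le_sum fun i _ => ?_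
    have ha := abs_le.1 (hf (pts i))
    have hb := abs_le.1 (hg (pts i))
    rw [← sq_abs]
    have hc : |f (pts i) - g (pts i)| ≤ 2 := abs_le.2 ⟨by linarith, by linarith⟩
    have h0 := abs_nonneg (f (pts i) - g (pts i))
    split_ifs with hif <;> nlinarith
  rw [Finset.sum_add_distrib, ← Finset.mul_sum] at h2
  simp only [Finset.sum_const, Finset.card_univ, Fintype.card_fin, nsmul_eq_mul,
    Finset.sum_boole] at h2
  have : (0 : ℝ) ≤ t ^ 2 * n := by positivity
  nlinarith

/-! ### Discretization and fat shattering -/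

/-- The value of `f` at the sample point `x y.1` is at least `2 η` above the upper end of the cell
with index `v = y.2`, where the cells are `[-1 + v η, -1 + (v + 1) η)` for `v = 0, …, b - 1`. -/
def IsHigh {Ω : Type*} {m b : ℕ} (x : Fin m → Ω) (η : ℝ) (f : Ω → ℝ) (y : Fin m × Fin b) :
    Prop :=
  -1 + ((y.2 : ℕ) + 3 : ℝ) * η ≤ f (x y.1)

/-- The value of `f` at the sample point `x y.1` is at most the upper end of the cell with index
`y.2`. -/
def IsLow {Ω : Type*} {m b : ℕ} (x : Fin m → Ω) (η : ℝ) (f : Ω → ℝ) (y : Fin m × Fin b) :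
    Prop :=
  f (x y.1) ≤ -1 + ((y.2 : ℕ) + 1 : ℝ) * η

theorem not_isHigh_and_isLow {Ω : Type*} {m b : ℕ} {x : Fin m → Ω} {η : ℝ} (hη : 0 < η)
    (f : Ω → ℝ) (y : Fin m × Fin b) (h1 : IsHigh x η f y) (h2 : IsLow x η f y) : False := by
  unfold IsHigh at h1
  unfold IsLow at h2
  nlinarith

open Classical in
/-- A shattered set of (sample point, level) pairs projects injectively onto a fat-shattered set
of points: two different levels over one point cannot be shattered together. -/
theorem exists_fatShattered_of_shatters {Ω : Type*} {m b : ℕ} {x : Fin m → Ω} {η : ℝ}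
    (hη : 0 < η) {F : Set (Ω → ℝ)} {S : Finset (Ω → ℝ)} (hSF : ∀ f ∈ S, f ∈ F)
    {B : Finset (Fin m × Fin b)} (hB : Shatters (IsHigh x η) (IsLow x η) S B) :
    ∃ A : Finset Ω, FatShattered F η A ∧ A.card = B.card := by
  have key : ∀ y ∈ B, ∀ y' ∈ B, y ≠ y' → x y.1 = x y'.1 →
      ((y.2 : ℕ) : ℝ) * η + 2 * η ≤ ((y'.2 : ℕ) : ℝ) * η := by
    intro y hy y' hy' hne hx
    obtain ⟨f, -, hU, hL⟩ := hB {y} (Finset.singleton_subset_iff.2 hy)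
    have h1 := hU y (Finset.mem_singleton_self _)
    have h2 := hL y' hy' (fun h => hne (Finset.mem_singleton.1 h).symm)
    unfold IsHigh at h1
    unfold IsLow at h2
    rw [hx] at h1
    nlinarith
  -- the level of a point is the middle of the undefined gap of the test in `B` above it
  refine ⟨B.image fun y => x y.1, ?_, Finset.card_image_of_injOn ?_⟩
  · refine ⟨fun ω => if h : ∃ y ∈ B, x y.1 = ω then
        -1 + (((h.choose.2 : Fin b) : ℕ) + 2 : ℝ) * η else 0, fun I hI => ?_⟩
    obtain ⟨f, hf, hU, hL⟩ := hB (B.filter fun y => x y.1 ∈ I) (Finset.filter_subset _ _)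
    refine ⟨f, hSF f hf, fun ω hω => ?_, fun ω hω hωI => ?_⟩
    · have h : ∃ y ∈ B, x y.1 = ω := by simpa using Finset.mem_image.1 (hI hω)
      have h1 := hU h.choose
        (Finset.mem_filter.2 ⟨h.choose_spec.1, by rw [h.choose_spec.2]; exact hω⟩)
      unfold IsHigh at h1
      rw [h.choose_spec.2] at h1
      simp only [dif_pos h]
      linarith
    · have h : ∃ y ∈ B, x y.1 = ω := by simpa using Finset.mem_image.1 hω
      have h1 := hL h.choose h.choose_spec.1 (fun h' => hωI (by
        have := (Finset.mem_filter.1 h').2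
        rwa [h.choose_spec.2] at this))
      unfold IsLow at h1
      rw [h.choose_spec.2] at h1
      simp only [dif_pos h]
      linarith
  · intro y hy y' hy' hx
    by_contra hne
    have h1 := key y hy y' hy' hne hx
    have h2 := key y' hy' y hy (Ne.symm hne) hx.symm
    linarith

open Classical in
/-- Where `g` exceeds `f` by `t / 2`, the cell containing the value of `f` is a test that is low
for `f` and high for `g`. -/
theorem card_gap_le_card_levels {Ω : Type*} {m : ℕ} (x : Fin m → Ω) {t : ℝ} (ht : 0 < t)
    {f : Ω → ℝ} (g : Ω → ℝ) (hf : ∀ ω, |f ω| ≤ 1) :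
    (Finset.univ.filter fun j => t / 2 ≤ g (x j) - f (x j)).card ≤
      (Finset.univ.filter fun y : Fin m × Fin (⌊16 / t⌋₊ + 1) =>
        IsLow x (t / 8) f y ∧ IsHigh x (t / 8) g y).card := by
  have hlev : ∀ j, ⌊(f (x j) + 1) / (t / 8)⌋₊ < ⌊16 / t⌋₊ + 1 := by
    intro j
    refine Nat.lt_succ_of_le (Nat.floor_le_floor ?_)
    rw [div_le_div_iff₀ (by positivity) ht]
    nlinarith [(abs_le.1 (hf (x j))).2]
  refine Finset.card_le_card_of_injOn (fun j => (j, ⟨_, hlev j⟩)) ?_ ?_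
  · intro j hj
    have hj : t / 2 ≤ g (x j) - f (x j) := by simpa using hj
    have h0 : 0 ≤ (f (x j) + 1) / (t / 8) := by
      have := (abs_le.1 (hf (x j))).1
      exact div_nonneg (by linarith) (by positivity)
    have h1 := Nat.floor_le h0
    have h2 := Nat.lt_floor_add_one ((f (x j) + 1) / (t / 8))
    rw [le_div_iff₀ (by positivity)] at h1
    rw [div_lt_iff₀ (by positivity)] at h2
    rw [Finset.mem_coe, Finset.mem_filter]
    simp only [Finset.mem_univ, true_and, IsLow, IsHigh]
    constructor <;> linarith
  · intro j _ j' _ h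
    exact congrArg Prod.fst h

open Classical in
theorem card_far_le_card_levels {Ω : Type*} {m : ℕ} (x : Fin m → Ω) {t : ℝ} (ht : 0 < t)
    {f g : Ω → ℝ} (hf : ∀ ω, |f ω| ≤ 1) (hg : ∀ ω, |g ω| ≤ 1) :
    (Finset.univ.filter fun j => t / 2 ≤ |f (x j) - g (x j)|).card ≤
      (Finset.univ.filter fun y : Fin m × Fin (⌊16 / t⌋₊ + 1) =>
        IsLow x (t / 8) f y ∧ IsHigh x (t / 8) g y).card +
      (Finset.univ.filter fun y : Fin m × Fin (⌊16 / t⌋₊ + 1) =>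
        IsLow x (t / 8) g y ∧ IsHigh x (t / 8) f y).card := by
  refine le_trans ?_ (add_le_add (card_gap_le_card_levels x ht g hf)
    (card_gap_le_card_levels x ht f hg))
  refine le_trans (Finset.card_le_card ?_) (Finset.card_union_le _ _)
  intro j hj
  simp only [Finset.mem_union, Finset.mem_filter, Finset.mem_univ, true_and] at hj ⊢
  rcases le_abs.1 hj with h | h
  · exact Or.inr h
  · exact Or.inl (by linarith)

/-! ### Entropy of separated sets and of the class -/

/-- Resolving `L ≲ d ℓ (ℓ + log (L / d))`, with `ℓ = log u`, into `L ≲ d ℓ ^ 2`. -/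
theorem entropy_bound_of_recursion {u d L M k : ℝ} (hu : 2 ≤ u) (hd : 1 ≤ d) (hdL : d ≤ L)
    (hM0 : 0 < M) (hM : M / d ≤ u ^ 11 * (L / d))
    (hk : k * Real.log 2 ≤ d * Real.log (M / d) + d)
    (hL : L ≤ (k + 1) * (12 * Real.log u)) : L ≤ 3000 * d * Real.log u ^ 2 := by
  have hd0 : 0 < d := by linarith
  have hx1 : 1 ≤ L / d := (one_le_div hd0).2 hdL
  set x := L / d with hx
  have hLx : L = d * x := by rw [hx]; field_simp
  set l := Real.log u with hl
  have h2 : 1 / 2 ≤ Real.log 2 := by linarith [Real.log_two_gt_d9]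
  have hl2 : 1 / 2 ≤ l := h2.trans (Real.log_le_log (by norm_num) hu)
  have hlog : Real.log (M / d) ≤ 11 * l + Real.log x := by
    refine (Real.log_le_log (by positivity) hM).trans (le_of_eq ?_)
    rw [Real.log_mul (by positivity) (by positivity), Real.log_pow]
    norm_num [hl]
  have hs : Real.log x ≤ 2 * √x := by
    have h3 := Real.log_le_sub_one_of_pos (Real.sqrt_pos.2 (by linarith : 0 < x))
    rw [Real.log_sqrt (by linarith)] at h3
    linarith
  have hsx : √x ^ 2 = x := Real.sq_sqrt (by linarith)
  set s := √x with hs'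
  have hs0 : 0 ≤ s := Real.sqrt_nonneg _
  have hk2 : k * Real.log 2 ≤ d * (13 * l + 2 * s) := by
    refine hk.trans ?_
    have : Real.log (M / d) + 1 ≤ 13 * l + 2 * s := by linarith
    nlinarith
  have hk3 : k ≤ 2 * (d * (13 * l + 2 * s)) := by
    have h4 : 0 ≤ d * (13 * l + 2 * s) := by positivity
    by_cases hk0 : k ≤ 0
    · linarith
    · push Not at hk0
      nlinarith
  have hk4 : k + 1 ≤ d * (28 * l + 4 * s) := by nlinarith
  have hx2 : d * x ≤ d * ((28 * l + 4 * s) * (12 * l)) := by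
    rw [← hLx, ← mul_assoc]
    exact hL.trans (mul_le_mul_of_nonneg_right hk4 (by linarith))
  have hx3 := le_of_mul_le_mul_left hx2 hd0
  have hx4 : x ≤ 3000 * l ^ 2 := by nlinarith [sq_nonneg (s - 48 * l), sq_nonneg l]
  rw [hLx]
  nlinarith

set_option maxHeartbeats 1000000 in
open Classical in
/-- The entropy bound for finite separated subsets of the class. -/
theorem log_card_le_of_separated {Ω : Type*} {F : Set (Ω → ℝ)} {n : ℕ} {pts : Fin n → Ω}
    {t : ℝ} {d : ℕ} (hF : ∀ f ∈ F, ∀ ω, |f ω| ≤ 1) (hn : 0 < n) (ht : 0 < t) (ht1 : t < 1)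
    (hd : 0 < d) (hfat : ∀ A : Finset Ω, FatShattered F (t / 8) A → A.card ≤ d)
    (S : Finset (Ω → ℝ)) (hSF : ∀ f ∈ S, f ∈ F)
    (hsep : ∀ f ∈ S, ∀ g ∈ S, f ≠ g → t < empL2Dist pts f g) :
    Real.log S.card ≤ 3000 * d * Real.log (2 / t) ^ 2 := by
  have hd1 : (1 : ℝ) ≤ d := by exact_mod_cast hd
  set u := 2 / t with hu
  have hu2 : 2 ≤ u := by rw [hu, le_div_iff₀ ht]; linarith
  have hut : t = 2 / u := by rw [hu]; field_simp
  have hl2 : 1 / 2 ≤ Real.log u := by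
    linarith [Real.log_two_gt_d9, Real.log_le_log (by norm_num) hu2]
  set L := Real.log S.card with hL
  rcases lt_or_ge L d with hLd | hLd
  · nlinarith [mul_le_mul hl2 hl2 (by norm_num) (by linarith)]
  have hL1 : 1 ≤ L := hd1.trans hLd
  have hN1 : (1 : ℝ) < S.card := by
    by_contra h
    have := Real.log_nonpos (Nat.cast_nonneg _) (not_lt.1 h)
    linarith
  -- the proportion of points at which two separated functions differ by at least `t / 2`
  set ρ := t ^ 2 / 8 with hρ
  have hρ0 : 0 < ρ := by positivity
  have hρ1 : ρ ≤ 1 := by rw [hρ]; nlinarith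
  set m := ⌈8 * L / ρ⌉₊ with hm
  have hm1 : 8 * L / ρ ≤ m := Nat.le_ceil _
  have hm2 : (m : ℝ) ≤ 8 * L / ρ + 1 := (Nat.ceil_lt_add_one (by positivity)).le
  have hm0 : (0 : ℝ) < m := lt_of_lt_of_le (by positivity) hm1
  have hmρ : 8 * L ≤ ρ * m := by rw [div_le_iff₀ hρ0] at hm1; linarith
  obtain ⟨φ, hφ⟩ := exists_good_sample (m := m) hn hN1.le (S.offDiag)
    (by
      rw [Finset.offDiag_card]
      have : S.card * S.card - S.card ≤ S.card ^ 2 := by rw [sq]; exact Nat.sub_le _ _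
      exact_mod_cast this)
    (fun p i => t / 2 ≤ |p.1 (pts i) - p.2 (pts i)|)
    (fun p hp => by
      obtain ⟨h1, h2, h3⟩ := Finset.mem_offDiag.1 hp
      exact card_far_of_lt_empL2Dist hn ht (hF _ (hSF _ h1)) (hF _ (hSF _ h2))
        (hsep _ h1 _ h2 h3)) hmρ
  set x : Fin m → Ω := fun j => pts (φ j) with hx
  set b := ⌊16 / t⌋₊ + 1 with hb
  have hb0 : (1 : ℝ) ≤ b := by rw [hb]; push_cast; linarith [Nat.cast_nonneg (α := ℝ) ⌊16 / t⌋₊]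
  have hbu : (b : ℝ) ≤ 9 * u := by
    have h1 := Nat.floor_le (by positivity : 0 ≤ 16 / t)
    have h2 : 16 / t = 8 * u := by rw [hu]; ring
    rw [hb]; push_cast; linarith
  have hY : (Fintype.card (Fin m × Fin b) : ℝ) = m * b := by simp
  have : Nonempty (Fin m × Fin b) :=
    ⟨⟨⟨0, by exact_mod_cast hm0⟩, ⟨0, Nat.succ_pos _⟩⟩⟩
  have hρu : ρ = 1 / (2 * u ^ 2) := by rw [hρ, hut]; field_simp; norm_num
  -- after sampling, two separated functions are split by a proportion `c` of all tests
  set c := ρ / 4 / b with hc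
  have hc0 : 0 < c := by positivity
  have hup : ∀ j : ℕ, (2 : ℝ) ^ j ≤ u ^ j := fun j => pow_le_pow_left₀ (by norm_num) hu2 j
  have hcK : 4 ≤ c * u ^ 12 := by
    rw [hc, hρu]
    rw [div_div, div_div, div_mul_eq_mul_div, le_div_iff₀ (by positivity)]
    have h9 := hup 9
    have hu3 : 0 < u ^ 3 := by positivity
    calc 4 * (2 * u ^ 2 * (4 * b)) ≤ 4 * (2 * u ^ 2 * (4 * (9 * u))) := by gcongr
      _ = 288 * u ^ 3 := by ring
      _ ≤ u ^ 9 * u ^ 3 := by norm_num at h9; nlinarith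
      _ = 1 * u ^ 12 := by ring
  have hK2 : 2 ≤ u ^ 12 := le_trans (by norm_num) (hup 12)
  set k := ⌊L / (12 * Real.log u)⌋₊ with hk
  have hl0 : 0 < 12 * Real.log u := by linarith
  have hk1 : (k : ℝ) * (12 * Real.log u) ≤ L :=
    (le_div_iff₀ hl0).1 (Nat.floor_le (by positivity))
  have hk2 : L ≤ ((k : ℝ) + 1) * (12 * Real.log u) :=
    ((div_lt_iff₀ hl0).1 (Nat.lt_floor_add_one _)).le
  have hKk : (u ^ 12) ^ k ≤ (S.card : ℝ) := by
    rw [← Real.log_le_log_iff (by positivity) (by linarith), Real.log_pow, Real.log_pow]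
    push_cast
    exact hk1
  have hmany := two_pow_le_card_shatteredSets (Y := Fin m × Fin b) (U := IsHigh x (t / 8))
    (L := IsLow x (t / 8)) (not_isHigh_and_isLow (by positivity)) hc0 hK2 hcK k S
    (fun f hf g hg hfg => by
      have h1 := hφ (f, g) (Finset.mem_offDiag.2 ⟨hf, hg, hfg⟩)
      have h2 := card_far_le_card_levels x ht (hF f (hSF f hf)) (hF g (hSF g hg))
      have h3 : c * Fintype.card (Fin m × Fin b) = ρ / 4 * m := by
        rw [hY, hc]; field_simp
      rw [h3]
      exact h1.trans (by exact_mod_cast h2)) hKk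
  have hbound : ∀ B ∈ shatteredSets (IsHigh x (t / 8)) (IsLow (b := b) x (t / 8)) S,
      B.card ≤ d := by
    intro B hB
    obtain ⟨A, hA, hAB⟩ := exists_fatShattered_of_shatters (by positivity) hSF
      (by simpa [shatteredSets] using hB : Shatters (IsHigh x (t / 8)) (IsLow x (t / 8)) S B)
    exact hAB ▸ hfat A hA
  have hLm : L ≤ m := by nlinarith
  have hdM : d ≤ Fintype.card (Fin m × Fin b) := by
    have : (d : ℝ) ≤ Fintype.card (Fin m × Fin b) := by rw [hY]; nlinarith
    exact_mod_cast this
  have hne : (shatteredSets (IsHigh x (t / 8)) (IsLow (b := b) x (t / 8)) S).Nonempty :=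
    Finset.card_pos.1 (lt_of_lt_of_le (by positivity) hmany)
  have hlog := log_card_le_of_card_le _ hd hdM hbound hne
  have hklog : (k : ℝ) * Real.log 2 ≤ Real.log
      (shatteredSets (IsHigh x (t / 8)) (IsLow (b := b) x (t / 8)) S).card := by
    rw [← Real.log_pow]
    exact Real.log_le_log (by positivity) (by exact_mod_cast hmany)
  rw [hY] at hlog
  refine entropy_bound_of_recursion hu2 hd1 hLd (by positivity : (0 : ℝ) < m * b) ?_
    (hklog.trans hlog) hk2
  rw [← mul_div_assoc]
  refine div_le_div_of_nonneg_right ?_ (by linarith)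
  have h8 := hup 8
  have hmu : (m : ℝ) ≤ 17 * u ^ 2 * L := by
    have h1 : 8 * L / ρ = 16 * u ^ 2 * L := by rw [hρu]; field_simp; ring
    have h2 : 1 ≤ u ^ 2 * L := by nlinarith [hup 2]
    rw [h1] at hm2; linarith
  calc (m : ℝ) * b ≤ (17 * u ^ 2 * L) * (9 * u) := by gcongr
    _ = 153 * (u ^ 3 * L) := by ring
    _ ≤ u ^ 8 * (u ^ 3 * L) := by
        refine mul_le_mul_of_nonneg_right ?_ (by positivity)
        norm_num at h8; linarith
    _ = u ^ 11 * L := by ring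

/-- In dimension `0` no two functions of the class are separated: a point at which they differ
by more than `t` is shattered by itself. -/
theorem not_lt_empL2Dist_of_fat_zero {Ω : Type*} {F : Set (Ω → ℝ)} {n : ℕ} {pts : Fin n → Ω}
    {t : ℝ} (hn : 0 < n) (ht : 0 < t)
    (hfat : ∀ A : Finset Ω, FatShattered F (t / 8) A → A.card ≤ 0)
    {f g : Ω → ℝ} (hf : f ∈ F) (hg : g ∈ F) : ¬ t < empL2Dist pts f g := by
  intro h
  have h1 := lt_sum_of_lt_empL2Dist hn ht h
  have h2 : ∃ i, t ^ 2 < (f (pts i) - g (pts i)) ^ 2 := by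
    by_contra! hcon
    have := Finset.sum_le_sum fun i (_ : i ∈ Finset.univ) => hcon i
    simp at this
    linarith
  obtain ⟨i, hi⟩ := h2
  have h3 : t < |f (pts i) - g (pts i)| := by
    have := sq_lt_sq.1 hi
    rwa [abs_of_pos ht] at this
  have key : ∀ f ∈ F, ∀ g ∈ F, t < f (pts i) - g (pts i) → False := by
    intro f hf g hg h
    have := hfat {pts i} ⟨fun _ => (f (pts i) + g (pts i)) / 2, fun I hsub => by
      by_cases hI : pts i ∈ I
      · refine ⟨f, hf, fun z hz => ?_, fun z hz hzI => ?_⟩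
        · obtain rfl : z = pts i := by
            exact Finset.mem_singleton.1 (hsub hz)
          linarith
        · exact absurd ((Finset.mem_singleton.1 hz) ▸ hI) hzI
      · refine ⟨g, hg, fun z hz => ?_, fun z hz hzI => ?_⟩
        · exact absurd ((Finset.mem_singleton.1 (hsub hz)) ▸ hz) hI
        · obtain rfl := Finset.mem_singleton.1 hz
          linarith⟩
    simp at this
  rcases lt_abs.1 h3 with h | h
  · exact key f hf g hg h
  · exact key g hg f hf (by linarith)

/-- A maximal separated set is a cover, so packing bounds give covering bounds. -/
theorem log_empL2CovN_le_of_packing {Ω : Type*} {F : Set (Ω → ℝ)} {n : ℕ} {pts : Fin n → Ω}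
    {t R : ℝ} (ht : 0 < t) (hR : 0 ≤ R)
    (hpack : ∀ S : Finset (Ω → ℝ), (∀ f ∈ S, f ∈ F) →
      (∀ f ∈ S, ∀ g ∈ S, f ≠ g → t < empL2Dist pts f g) → Real.log S.card ≤ R) :
    Real.log (empL2CovN F pts t) ≤ R := by
  classical
  set P : Set ℕ := {k | ∃ S : Finset (Ω → ℝ), S.card = k ∧ (∀ f ∈ S, f ∈ F) ∧
    ∀ f ∈ S, ∀ g ∈ S, f ≠ g → t < empL2Dist pts f g} with hP
  have hne : P.Nonempty := ⟨0, ∅, by simp⟩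
  have hbdd : BddAbove P := by
    refine ⟨⌈Real.exp R⌉₊, ?_⟩
    rintro k ⟨S, rfl, h1, h2⟩
    rcases Nat.eq_zero_or_pos S.card with h0 | h0
    · omega
    · have := (Real.log_le_iff_le_exp (by exact_mod_cast h0)).1 (hpack S h1 h2)
      exact_mod_cast this.trans (Nat.le_ceil _)
  obtain ⟨S, hScard, hSF, hsep⟩ := Nat.sSup_mem hne hbdd
  have hcov : empL2CovN F pts t ≤ S.card := by
    refine Nat.sInf_le ⟨S, rfl, fun f hf => ?_⟩
    by_contra! hcon
    have hself : empL2Dist pts f f ≤ t := by simp [empL2Dist, ht.le]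
    have hfS : f ∉ S := fun h => absurd (hcon f h) (not_lt.2 hself)
    have hcomm : ∀ g h : Ω → ℝ, empL2Dist pts g h = empL2Dist pts h g := by
      intro g h
      unfold empL2Dist
      congr 2
      exact Finset.sum_congr rfl fun i _ => by ring
    have hmem : (insert f S).card ∈ P := by
      refine ⟨insert f S, rfl, ?_, ?_⟩
      · intro g hg
        rcases Finset.mem_insert.1 hg with rfl | hg
        · exact hf
        · exact hSF g hg
      · intro g hg h hh hgh
        rcases Finset.mem_insert.1 hg with hgf | hgS <;>
          rcases Finset.mem_insert.1 hh with hhf | hhS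
        · exact absurd (hgf.trans hhf.symm) hgh
        · rw [hgf]; exact hcon h hhS
        · rw [hcomm, hhf]; exact hcon g hgS
        · exact hsep g hgS h hhS hgh
    have := le_csSup hbdd hmem
    rw [Finset.card_insert_of_notMem hfS] at this
    omega
  rcases Nat.eq_zero_or_pos (empL2CovN F pts t) with h0 | h0
  · rw [h0]; simpa using hR
  · exact (Real.log_le_log (by exact_mod_cast h0) (by exact_mod_cast hcov)).trans
      (hpack S hSF hsep)

theorem empirical_entropy_le_fat_shattering :
    ∃ C : ℝ, 0 < C ∧
      ∀ (Ω : Type) (F : Set (Ω → ℝ)) (n : ℕ) (pts : Fin n → Ω) (t : ℝ) (d : ℕ),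
        (∀ f ∈ F, ∀ ω, |f ω| ≤ 1) →
        0 < n → 0 < t →
        (∀ A : Finset Ω, FatShattered F (t / 8) A → A.card ≤ d) →
        Real.log (empL2CovN F pts t) ≤ C * d * (Real.log (2 / t)) ^ 2 := by
  refine ⟨3000, by norm_num, fun Ω F n pts t d hF hn ht hfat => ?_⟩
  rcases lt_or_ge t 1 with ht1 | ht1
  · refine log_empL2CovN_le_of_packing ht (by positivity) fun S hSF hsep => ?_
    rcases Nat.eq_zero_or_pos d with rfl | hd
    · have h1 : S.card ≤ 1 := Finset.card_le_one.2 fun f hf g hg => by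
        by_contra hfg
        exact not_lt_empL2Dist_of_fat_zero hn ht hfat (hSF f hf) (hSF g hg) (hsep f hf g hg hfg)
      have h2 := Real.log_nonpos (Nat.cast_nonneg S.card) (by exact_mod_cast h1)
      simpa using h2
    · exact log_card_le_of_separated hF hn ht ht1 hd hfat S hSF hsep
    -- for `t ≥ 1` the single ball centred at `0` covers the class
  · have h1 : empL2CovN F pts t ≤ 1 := by
      refine Nat.sInf_le ⟨{0}, Finset.card_singleton _, fun f hf => ⟨0, by simp, ?_⟩⟩
      have hn' : (0 : ℝ) < n := by exact_mod_cast hn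
      refine (Real.sqrt_le_one.2 ?_).trans ht1
      rw [inv_mul_eq_div, div_le_one hn']
      calc ∑ i, (f (pts i) - (0 : Ω → ℝ) (pts i)) ^ 2 ≤ ∑ _i : Fin n, (1 : ℝ) := by
            refine Finset.sum_le_sum fun i _ => ?_
            have := (sq_le_one_iff_abs_le_one _).2 (hF f hf (pts i))
            simpa using this
        _ = n := by simp
    have h2 := Real.log_nonpos (Nat.cast_nonneg (empL2CovN F pts t)) (by exact_mod_cast h1)
    exact h2.trans (by positivity)
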